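/- (Proposition 3.5) If λ₁³ ≠ q², then there is no ρ-invariant subspace of ℂ⁶ of dimension 5. -/

import Mathlib

open Matrix Polynomial

noncomputable def M1 (q l : ℂ) : Matrix (Fin 6) (Fin 6) ℂ :=
  !![q, -q^2*l, q^2, q^2, -q^2/l, 1;
     0, l,      q^2, 0,   1/l,    1;
     0, 0,      q^2, 0,   0,      1;
     0, 0,      0,   q^2, -q^2/l, 1;
     0, 0,      0,   0,   1/l,    1;
     0, 0,      0,   0,   0,      1]

noncomputable def M2 (q l : ℂ) : Matrix (Fin 6) (Fin 6) ℂ :=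
  !![1,    0,    0,   0,   0,   0;
     -1/l, 1/l,  0,   0,   0,   0;
     q,    1,    q^2, 0,   0,   0;
     -q^2, 0,    0,   q^2, 0,   0;
     l,    -l,   0,   -l,  l,   0;
     -1,   -q^2, -q,  1,   q^2, q]

/-- A subspace `W ⊆ ℂ⁶` is ρ-invariant if it is mapped into itself by both `M1` and `M2`
(acting on column vectors). -/
def RhoInvariant (q l : ℂ) (W : Submodule ℂ (Fin 6 → ℂ)) : Prop :=
  (∀ x ∈ W, (M1 q l).mulVec x ∈ W) ∧ (∀ x ∈ W, (M2 q l).mulVec x ∈ W)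

/-!
Both `M1 * M2 * M1` and `M2 * M1 * M2` equal the same antidiagonal matrix `Δ`, and `Δ² = -q²`. A
hyperplane stable under `M1` and `M2` is the kernel of a row vector `v` with `v M1 = a v` and
`v M2 = b v`. The braid relation forces `a = b`, so `v Δ = a³ v` and `a⁶ = -q² ≠ 1`; in particular
`a ≠ q` and `a ≠ q²`. The triangular system `v M1 = a v` then makes `v 0` and `v 3` vanish, and
since `Δ` reverses the order of the coordinates, the others follow.
-/

section InvariantHyperplane

open Module

variable {K V n : Type*} [Field K]

lemma exists_dual_comp_eq_smul_of_finrank_add_one [AddCommGroup V] [Module K V]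
    [FiniteDimensional K V] {W : Submodule K V} (hW : finrank K W + 1 = finrank K V) :
    ∃ f : Dual K V, f ≠ 0 ∧ ∀ T : End K V, W ∈ T.invtSubmodule → ∃ a : K, f ∘ₗ T = a • f := by
  obtain ⟨f, hf, hWf⟩ := W.exists_le_ker_of_lt_top (Submodule.lt_top_of_finrank_lt_finrank (by lia))
  have hker : W = LinearMap.ker f :=
    Submodule.eq_of_le_of_finrank_eq hWf <|
      Nat.succ_injective (hW.trans (Dual.finrank_ker_add_one_of_ne_zero hf).symm)
  refine ⟨f, hf, fun T hT ↦ ?_⟩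
  have hle : ⨅ _ : Unit, LinearMap.ker f ≤ LinearMap.ker (f ∘ₗ T) := by
    rw [iInf_const, ← hker]
    exact fun x hx ↦ hWf (hT hx)
  have hspan : f ∘ₗ T ∈ Submodule.span K {f} := by simpa using mem_span_of_iInf_ker_le_ker hle
  obtain ⟨a, ha⟩ := Submodule.mem_span_singleton.mp hspan
  exact ⟨a, ha.symm⟩

lemma exists_vecMul_eq_smul_of_finrank_add_one [Fintype n] {W : Submodule K (n → K)}
    (hW : finrank K W + 1 = Fintype.card n) :
    ∃ v : n → K, v ≠ 0 ∧
      ∀ A : Matrix n n K, (∀ x ∈ W, A *ᵥ x ∈ W) → ∃ a : K, v ᵥ* A = a • v := by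
  classical
  obtain ⟨f, hf, hinv⟩ :=
    exists_dual_comp_eq_smul_of_finrank_add_one (hW.trans (finrank_fintype_fun_eq_card K).symm)
  obtain ⟨v, rfl⟩ := (dotProductEquiv K n).surjective f
  refine ⟨v, by simpa using hf, fun A hA ↦ ?_⟩
  obtain ⟨a, ha⟩ := hinv A.mulVecLin hA
  refine ⟨a, dotProduct_eq _ _ fun x ↦ ?_⟩
  simpa [dotProduct_mulVec] using LinearMap.congr_fun ha x

end InvariantHyperplane

section LeftEigenvector

lemma vecMul_mul_mul_eq_smul {R n : Type*} [CommSemiring R] [Fintype n] {A B : Matrix n n R}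
    {v : n → R} {a b : R} (hA : v ᵥ* A = a • v) (hB : v ᵥ* B = b • v) :
    v ᵥ* (A * B * A) = (a * b * a) • v := by
  simp only [← vecMul_vecMul, hA, hB, smul_vecMul, smul_smul]

variable {R n : Type*} [CommRing R] [IsDomain R] [Fintype n] [DecidableEq n]
  {A B : Matrix n n R} {v : n → R} {a b c : R}

lemma sq_eq_of_vecMul_eq_smul (hv : v ≠ 0) (hA : v ᵥ* A = a • v) (hsq : A ^ 2 = c • 1) :
    a ^ 2 = c :=
  smul_left_injective R hv <| calc
    a ^ 2 • v = v ᵥ* A ^ 2 := by rw [pow_two A, ← vecMul_vecMul, hA, smul_vecMul, hA, smul_smul, sq]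
    _ = c • v := by rw [hsq, vecMul_smul, vecMul_one]

lemma eq_of_vecMul_eq_smul_of_braid (hv : v ≠ 0) (hA : v ᵥ* A = a • v) (hB : v ᵥ* B = b • v)
    (hbraid : A * B * A = B * A * B) (hsq : (A * B * A) ^ 2 = c • 1) (hc : c ≠ 0) : a = b := by
  have habab : a * b * a = b * a * b := smul_left_injective R hv <| by
    simp only [← vecMul_mul_mul_eq_smul hA hB, ← vecMul_mul_mul_eq_smul hB hA, hbraid]
  have hne : a * b ≠ 0 := by
    intro hab
    have := sq_eq_of_vecMul_eq_smul hv (vecMul_mul_mul_eq_smul hA hB) hsq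
    simp [hab, hc.symm] at this
  exact mul_left_cancel₀ hne (by rw [habab, mul_comm b a])

end LeftEigenvector

/-- The image under `ρ` of the Garside half twist `Δ = σ₁σ₂σ₁` of the braid group `B₃`, given by its
entries: up to scaling, it acts on row vectors by reversing the order of the coordinates. -/
noncomputable def halfTwist (q l : ℂ) : Matrix (Fin 6) (Fin 6) ℂ :=
  !![0,  0,   0,  0,   0,    q;
     0,  0,   0,  0,   -q/l, 0;
     0,  0,   0,  q^2, 0,    0;
     0,  0,   -1, 0,   0,    0;
     0,  q*l, 0,  0,   0,    0;
     -q, 0,   0,  0,   0,    0]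

section BraidRelation

variable {q l : ℂ}

lemma M1_mul_M2 (hq : q ^ 2 + q + 1 = 0) (hl : l ≠ 0) :
    M1 q l * M2 q l =
      !![0,  0,    0,  0,  0,   q;
         0,  0,    0,  0,  -q,  q;
         0,  0,    0,  1,  q^2, q;
         0,  0,    -q, 0,  0,   q;
         0,  q,    -q, 0,  -q,  q;
         -1, -q^2, -q, 1,  q^2, q] := by
  ext i j
  fin_cases i <;> fin_cases j <;> simp [M1, M2, mul_apply, Fin.sum_univ_six] <;> grind

lemma M1_mul_M2_mul_M1 (hq : q ^ 2 + q + 1 = 0) (hl : l ≠ 0) :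
    M1 q l * M2 q l * M1 q l = halfTwist q l := by
  rw [M1_mul_M2 hq hl]
  ext i j
  fin_cases i <;> fin_cases j <;> simp [M1, halfTwist, mul_apply, Fin.sum_univ_six] <;> grind

lemma M2_mul_M1_mul_M2 (hq : q ^ 2 + q + 1 = 0) (hl : l ≠ 0) :
    M2 q l * M1 q l * M2 q l = halfTwist q l := by
  rw [mul_assoc, M1_mul_M2 hq hl]
  ext i j
  fin_cases i <;> fin_cases j <;> simp [M2, halfTwist, mul_apply, Fin.sum_univ_six] <;> grind

lemma halfTwist_sq (hl : l ≠ 0) : halfTwist q l ^ 2 = (-q ^ 2) • 1 := by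
  ext i j
  fin_cases i <;> fin_cases j <;> simp [halfTwist, pow_two, mul_apply, Fin.sum_univ_six] <;> grind

end BraidRelation

section CommonLeftEigenvector

variable {q l a b : ℂ} {v : Fin 6 → ℂ}

lemma vecMul_halfTwist_eq_smul (hq : q ^ 2 + q + 1 = 0) (hl : l ≠ 0) (hv : v ≠ 0)
    (h1 : v ᵥ* M1 q l = a • v) (h2 : v ᵥ* M2 q l = b • v) : v ᵥ* halfTwist q l = a ^ 3 • v := by
  have hΔ := M1_mul_M2_mul_M1 hq hl
  have hq0 : q ≠ 0 := by rintro rfl; simp at hq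
  obtain rfl : a = b :=
    eq_of_vecMul_eq_smul_of_braid hv h1 h2 (hΔ.trans (M2_mul_M1_mul_M2 hq hl).symm)
      (hΔ ▸ halfTwist_sq hl) (neg_ne_zero.mpr (pow_ne_zero 2 hq0))
  rw [← hΔ, vecMul_mul_mul_eq_smul h1 h2, ← pow_three']

lemma apply_rev_eq_zero_of_vecMul_halfTwist (ha : a ≠ 0) (h : v ᵥ* halfTwist q l = a • v)
    {i : Fin 6} (hi : v i = 0) : v i.rev = 0 := by
  have hrev : (v ᵥ* halfTwist q l) i.rev = v i * halfTwist q l i i.rev := by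
    fin_cases i <;> simp [halfTwist, vecMul, dotProduct, Fin.sum_univ_six]
  rw [h, hi, zero_mul, Pi.smul_apply, smul_eq_mul] at hrev
  exact (mul_eq_zero.mp hrev).resolve_left ha

lemma eq_zero_of_vecMul_M1_of_vecMul_M2 (hq : q ^ 2 + q + 1 = 0) (hl : l ≠ 0)
    (h1 : v ᵥ* M1 q l = a • v) (h2 : v ᵥ* M2 q l = b • v) : v = 0 := by
  by_contra hv
  have hvΔ := vecMul_halfTwist_eq_smul hq hl hv h1 h2
  have ha6 : (a ^ 3) ^ 2 = -q ^ 2 := sq_eq_of_vecMul_eq_smul hv hvΔ (halfTwist_sq hl)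
  have hq3 : q ^ 3 = 1 := by linear_combination (q - 1) * hq
  have hq0 : q ≠ 0 := by rintro rfl; simp at hq
  have ha0 : a ≠ 0 := by rintro rfl; simp [hq0] at ha6
  have ha3 : a ^ 3 ≠ 1 := fun h ↦ hq0 (by rw [h] at ha6; linear_combination hq - ha6)
  have haq : a ≠ q := by rintro rfl; exact ha3 hq3
  have haq2 : a ≠ q ^ 2 := by rintro rfl; exact ha3 (by linear_combination (q ^ 3 + 1) * hq3)
  have hrev {i : Fin 6} : v i = 0 → v i.rev = 0 :=
    apply_rev_eq_zero_of_vecMul_halfTwist (pow_ne_zero 3 ha0) hvΔ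
  have col0 : v 0 * q = a * v 0 := by
    simpa [M1, vecMul, dotProduct, Fin.sum_univ_six] using congrFun h1 0
  have col2 : v 0 * q ^ 2 + v 1 * q ^ 2 + v 2 * q ^ 2 = a * v 2 := by
    simpa [M1, vecMul, dotProduct, Fin.sum_univ_six] using congrFun h1 2
  have col3 : v 0 * q ^ 2 + v 3 * q ^ 2 = a * v 3 := by
    simpa [M1, vecMul, dotProduct, Fin.sum_univ_six] using congrFun h1 3
  have v0 : v 0 = 0 := by grind
  have v3 : v 3 = 0 := by grind
  have v5 : v 5 = 0 := hrev v0
  have v2 : v 2 = 0 := hrev v3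
  have v1 : v 1 = 0 := by grind
  have v4 : v 4 = 0 := hrev v1
  exact hv (by ext i; fin_cases i <;> assumption)

end CommonLeftEigenvector

theorem stmt12_general (q l : ℂ) (hq3 : q ^ 3 = 1) (hq1 : q ≠ 1) (hl0 : l ≠ 0) :
    ¬ ∃ W : Submodule ℂ (Fin 6 → ℂ), RhoInvariant q l W ∧ Module.finrank ℂ W = 5 := by
  rintro ⟨W, ⟨hW1, hW2⟩, hW⟩
  have hq : q ^ 2 + q + 1 = 0 :=
    mul_left_cancel₀ (sub_ne_zero.mpr hq1) (by linear_combination hq3)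
  obtain ⟨v, hv, hinv⟩ := exists_vecMul_eq_smul_of_finrank_add_one (W := W) (by simp [hW])
  obtain ⟨a, ha⟩ := hinv _ hW1
  obtain ⟨b, hb⟩ := hinv _ hW2
  exact hv (eq_zero_of_vecMul_M1_of_vecMul_M2 hq hl0 ha hb)

theorem stmt12 (q l : ℂ) (hq3 : q^3 = 1) (hq1 : q ≠ 1) (hl0 : l ≠ 0)
    (hm1 : l ≠ -1) (h1 : l ≠ 1) (hq : l ≠ q) (hq2 : l ≠ q^2) (hcube : l^3 ≠ q^2) :
    ¬ ∃ W : Submodule ℂ (Fin 6 → ℂ), RhoInvariant q l W ∧ Module.finrank ℂ W = 5 :=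
  stmt12_general q l hq3 hq1 hl0
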